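/- For every theta in the open interval (0, pi/2) with theta ≠ pi/4, the quantum correlation p_theta is minimally network nonclassical in the minimal 3-chain scenario: p_theta does not belong to S0, while p_theta belongs to both S1^[AB^O BC^L] and S1^[AB^L BC^O]. -/

import Mathlib

open Finset

/-- A correlation in the minimal 3-chain scenario: `p a b c x z = p(a,b,c|x,z)`. -/
abbrev Corr : Type := Fin 2 → Fin 2 → Fin 2 → Fin 2 → Fin 2 → ℝ

/-- `p` is a valid correlation: nonnegative and normalized for every input pair. -/
def IsCorrelation (p : Corr) : Prop :=
  (∀ a b c x z, 0 ≤ p a b c x z) ∧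
  (∀ x z, ∑ a : Fin 2, ∑ b : Fin 2, ∑ c : Fin 2, p a b c x z = 1)

/-- Probability weights on the finite set `Fin n`. -/
def IsWeights {n : ℕ} (q : Fin n → ℝ) : Prop :=
  (∀ l, 0 ≤ q l) ∧ ∑ l, q l = 1

/-- A no-signalling box with binary outputs and input sets `X`, `Y`. -/
def IsNSBox {X Y : Type} [Fintype X] [Fintype Y]
    (nb : Fin 2 → Fin 2 → X → Y → ℝ) : Prop :=
  (∀ o1 o2 x y, 0 ≤ nb o1 o2 x y) ∧
  (∀ x y, ∑ o1 : Fin 2, ∑ o2 : Fin 2, nb o1 o2 x y = 1) ∧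
  (∀ o1 x y y', ∑ o2 : Fin 2, nb o1 o2 x y = ∑ o2 : Fin 2, nb o1 o2 x y') ∧
  (∀ o2 x x' y, ∑ o1 : Fin 2, nb o1 o2 x y = ∑ o1 : Fin 2, nb o1 o2 x' y)

/-- `S0`: classical 3-chain correlations. -/
def MemS0 (p : Corr) : Prop :=
  ∃ (n1 n2 : ℕ) (q1 : Fin n1 → ℝ) (q2 : Fin n2 → ℝ)
    (pA : Fin 2 → Fin 2 → Fin n1 → ℝ)
    (pB : Fin 2 → Fin n1 → Fin n2 → ℝ)
    (pC : Fin 2 → Fin 2 → Fin n2 → ℝ),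
    IsWeights q1 ∧ IsWeights q2 ∧
    (∀ a x l1, 0 ≤ pA a x l1) ∧ (∀ x l1, ∑ a : Fin 2, pA a x l1 = 1) ∧
    (∀ b l1 l2, 0 ≤ pB b l1 l2) ∧ (∀ l1 l2, ∑ b : Fin 2, pB b l1 l2 = 1) ∧
    (∀ c z l2, 0 ≤ pC c z l2) ∧ (∀ z l2, ∑ c : Fin 2, pC c z l2 = 1) ∧
    (∀ a b c x z, p a b c x z =
      ∑ l1, ∑ l2, q1 l1 * q2 l2 * pA a x l1 * pB b l1 l2 * pC c z l2)

/-- `S1^[AB^O BC^L]`: a no-signalling (OPT) source between Alice and Bob,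
a classical source between Bob and Charlie. -/
def MemS1ABo (p : Corr) : Prop :=
  ∃ (n : ℕ) (q : Fin n → ℝ)
    (nb : Fin 2 → Fin 2 → Fin 2 → Fin n → ℝ)
    (pC : Fin 2 → Fin 2 → Fin n → ℝ),
    IsWeights q ∧ IsNSBox nb ∧
    (∀ c z l, 0 ≤ pC c z l) ∧ (∀ z l, ∑ c : Fin 2, pC c z l = 1) ∧
    (∀ a b c x z, p a b c x z = ∑ l, q l * nb a b x l * pC c z l)

/-- `S1^[AB^L BC^O]`: a classical source between Alice and Bob,
a no-signalling (OPT) source between Bob and Charlie. -/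
def MemS1BCo (p : Corr) : Prop :=
  ∃ (n : ℕ) (q : Fin n → ℝ)
    (pA : Fin 2 → Fin 2 → Fin n → ℝ)
    (nb : Fin 2 → Fin 2 → Fin n → Fin 2 → ℝ),
    IsWeights q ∧
    (∀ a x l, 0 ≤ pA a x l) ∧ (∀ x l, ∑ a : Fin 2, pA a x l = 1) ∧
    IsNSBox nb ∧
    (∀ a b c x z, p a b c x z = ∑ l, q l * pA a x l * nb b c l z)

/-- `S2`: the no-signalling constraints of the 3-chain network. -/
def MemS2 (p : Corr) : Prop :=
  (∃ (pA : Fin 2 → Fin 2 → ℝ) (pC : Fin 2 → Fin 2 → ℝ),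
    (∀ a x, 0 ≤ pA a x) ∧ (∀ x, ∑ a : Fin 2, pA a x = 1) ∧
    (∀ c z, 0 ≤ pC c z) ∧ (∀ z, ∑ c : Fin 2, pC c z = 1) ∧
    (∀ a c x z, ∑ b : Fin 2, p a b c x z = pA a x * pC c z)) ∧
  (∀ a b x z z', ∑ c : Fin 2, p a b c x z = ∑ c : Fin 2, p a b c x z') ∧
  (∀ b c x x' z, ∑ a : Fin 2, p a b c x z = ∑ a : Fin 2, p a b c x' z)

open Matrix

noncomputable def sigx : Matrix (Fin 2) (Fin 2) ℂ := !![0, 1; 1, 0]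
noncomputable def sigz : Matrix (Fin 2) (Fin 2) ℂ := !![1, 0; 0, -1]

/-- `|φ⁺⟩ = (|00⟩ + |11⟩)/√2` as a vector on `Fin 2 × Fin 2`. -/
noncomputable def phiPlusVec : Fin 2 × Fin 2 → ℂ := fun q =>
  if q.1 = q.2 then ((Real.sqrt 2 : ℂ))⁻¹ else 0

/-- 16-dimensional index set, tensor factors ordered (A, B1, B2, C). -/
abbrev Q4 : Type := Fin 2 × Fin 2 × Fin 2 × Fin 2

/-- `|ψ⟩ = |φ⁺⟩_{A B1} ⊗ |φ⁺⟩_{B2 C}`. -/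
noncomputable def psiES : Q4 → ℂ := fun i =>
  phiPlusVec (i.1, i.2.1) * phiPlusVec (i.2.2.1, i.2.2.2)

/-- Alice's / Charlie's observables: `A_0 = C_0 = σ_x`, `A_1 = C_1 = σ_z`. -/
noncomputable def obsXZ : Fin 2 → Matrix (Fin 2) (Fin 2) ℂ := fun x =>
  if x = 0 then sigx else sigz

/-- Projectors `(I + (-1)^a (obsXZ x))/2`. -/
noncomputable def projXZ (a x : Fin 2) : Matrix (Fin 2) (Fin 2) ℂ :=
  (2⁻¹ : ℂ) • (1 + ((-1 : ℂ) ^ (a : ℕ)) • obsXZ x)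

/-- `|ψ_θ⟩ = sin θ |01⟩ + cos θ |10⟩`. -/
noncomputable def psiTheta (θ : ℝ) : Fin 2 × Fin 2 → ℂ := fun q =>
  if q = ((0 : Fin 2), (1 : Fin 2)) then (Real.sin θ : ℂ)
  else if q = ((1 : Fin 2), (0 : Fin 2)) then (Real.cos θ : ℂ) else 0

/-- Bob's measurement: `B_0(θ) = |ψ_θ⟩⟨ψ_θ|`, `B_1(θ) = I - B_0(θ)`. -/
noncomputable def Btheta (θ : ℝ) : Fin 2 → Matrix (Fin 2 × Fin 2) (Fin 2 × Fin 2) ℂ := fun b =>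
  if b = 0 then vecMulVec (psiTheta θ) (star (psiTheta θ))
  else 1 - vecMulVec (psiTheta θ) (star (psiTheta θ))

/-- Entrywise Kronecker product `P^A(a|x) ⊗ B_b(θ) ⊗ P^C(c|z)`. -/
noncomputable def opTheta (θ : ℝ) (a b c x z : Fin 2) : Matrix Q4 Q4 ℂ :=
  Matrix.of fun i j =>
    projXZ a x i.1 j.1 * Btheta θ b (i.2.1, i.2.2.1) (j.2.1, j.2.2.1) *
      projXZ c z i.2.2.2 j.2.2.2

/-- `p_θ(a,b,c|x,z) = ⟨ψ, (P^A(a|x) ⊗ B_b(θ) ⊗ P^C(c|z)) ψ⟩`. -/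
noncomputable def pTheta (θ : ℝ) : Corr := fun a b c x z =>
  (dotProduct (star psiES) (mulVec (opTheta θ a b c x z) psiES)).re

/-- The sign `(-1)^a` of a binary outcome. -/
def outcomeSign (a : Fin 2) : ℝ := ![1, -1] a

@[simp] lemma outcomeSign_zero : outcomeSign 0 = 1 := rfl

@[simp] lemma outcomeSign_one : outcomeSign 1 = -1 := rfl

lemma outcomeSign_eq_or (a : Fin 2) : outcomeSign a = 1 ∨ outcomeSign a = -1 := by
  fin_cases a <;> simp

/-- The expectation `⟨ψ_θ, P(a|x) ⊗ P(c|z) ψ_θ⟩ / 4`. -/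
noncomputable def bobZeroProb (θ : ℝ) (a c x z : Fin 2) : ℝ :=
  (1 - outcomeSign a * (if x = 0 then 0 else Real.cos (2 * θ))
    + outcomeSign c * (if z = 0 then 0 else Real.cos (2 * θ))
    + outcomeSign a * outcomeSign c *
      (if x = 0 then (if z = 0 then Real.sin (2 * θ) else 0)
        else (if z = 0 then 0 else -1))) / 16

lemma projXZ_apply (a x i j : Fin 2) :
    projXZ a x i j = (((if i = j then 1 else 0) + outcomeSign a *
      (if x = 0 then (if i = j then 0 else 1)
        else (if i = j then outcomeSign i else 0)) : ℝ) / 2 : ℂ) := by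
  fin_cases a <;> fin_cases x <;> fin_cases i <;> fin_cases j <;>
    simp [projXZ, obsXZ, sigx, sigz] <;> norm_num

lemma pTheta_eq_sum (θ : ℝ) (a b c x z : Fin 2) :
    pTheta θ a b c x z = (∑ i : Fin 2, ∑ k : Fin 2, ∑ j : Fin 2, ∑ l : Fin 2,
      projXZ a x i j * Btheta θ b (i, k) (j, l) * projXZ c z k l / 4).re := by
  have hs : ((Real.sqrt 2 : ℝ) : ℂ)⁻¹ * ((Real.sqrt 2 : ℝ) : ℂ)⁻¹ = 1 / 2 := by
    rw [← mul_inv, ← Complex.ofReal_mul, Real.mul_self_sqrt (by norm_num)]; norm_num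
  unfold pTheta
  congr 1
  simp only [dotProduct, mulVec, Fintype.sum_prod_type, Fin.sum_univ_two, opTheta, psiES,
    phiPlusVec, Pi.star_apply, Matrix.of_apply]
  simp [hs]
  ring

/-- The real amplitudes of `ψ_θ`. -/
noncomputable def psiThetaAmplitude (θ : ℝ) (i k : Fin 2) : ℝ :=
  !![0, Real.sin θ; Real.cos θ, 0] i k

lemma Btheta_apply (θ : ℝ) (b i k j l : Fin 2) :
    Btheta θ b (i, k) (j, l) =
      (((if i = j ∧ k = l then (1 - outcomeSign b) / 2 else 0) + outcomeSign b *
        (psiThetaAmplitude θ i k * psiThetaAmplitude θ j l) : ℝ) : ℂ) := by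
  have hpsi : ∀ i k, psiTheta θ (i, k) = (psiThetaAmplitude θ i k : ℂ) := by
    intro i k
    fin_cases i <;> fin_cases k <;> simp [psiTheta, psiThetaAmplitude]
  fin_cases b <;>
    simp [Btheta, vecMulVec_apply, hpsi, Matrix.one_apply, apply_ite, sub_eq_add_neg]

lemma pTheta_eq (θ : ℝ) (a b c x z : Fin 2) :
    pTheta θ a b c x z = 1 / 8 + outcomeSign b * (bobZeroProb θ a c x z - 1 / 8) := by
  have hsc := Real.sin_sq_add_cos_sq θ
  rw [pTheta_eq_sum]
  simp only [projXZ_apply, Btheta_apply]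
  norm_cast
  simp only [Fin.sum_univ_two, bobZeroProb, Real.sin_two_mul, Real.cos_two_mul',
    psiThetaAmplitude]
  rcases outcomeSign_eq_or b with hb | hb <;> fin_cases x <;> fin_cases z <;>
    rcases outcomeSign_eq_or a with ha | ha <;> rcases outcomeSign_eq_or c with hc | hc <;>
    simp [ha, hb, hc] <;> linarith

lemma pTheta_swap (θ : ℝ) (a b c x z : Fin 2) :
    pTheta (Real.pi / 2 - θ) c b a z x = pTheta θ a b c x z := by
  have h : 2 * (Real.pi / 2 - θ) = Real.pi - 2 * θ := by ring
  simp only [pTheta_eq, bobZeroProb, h, Real.cos_pi_sub, Real.sin_pi_sub]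
  split_ifs <;> ring

lemma MemS1BCo.of_swap {p : Corr} (h : MemS1ABo fun a b c x z => p c b a z x) :
    MemS1BCo p := by
  obtain ⟨n, q, nb, pC, hq, ⟨h0, h1, hA, hB⟩, hC0, hC1, hp⟩ := h
  refine ⟨n, q, pC, fun b c l z => nb c b z l, hq, hC0, hC1,
    ⟨fun _ _ _ _ => h0 _ _ _ _, fun l z => ?_, fun b l z z' => hB b z z' l,
      fun c l l' z => hA c z l l'⟩, fun a b c x z => ?_⟩
  · rw [Finset.sum_comm]; exact h1 z l
  · refine (hp c b a z x).trans ?_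
    exact Finset.sum_congr rfl fun l _ => by ring

/-- Charlie's deterministic strategies: the sign of the response to input `z`. -/
def strategySign (z : Fin 2) (l : Fin 4) : ℝ :=
  !![1, 1, -1, -1; 1, -1, 1, -1] z l

lemma strategySign_eq_or (z : Fin 2) (l : Fin 4) :
    strategySign z l = 1 ∨ strategySign z l = -1 := by
  fin_cases z <;> fin_cases l <;> simp [strategySign]

/-- The joint probability of Alice's outcome `a` and `b = 0` given Charlie's strategy `l`. -/
noncomputable def boxBobZeroProb (θ : ℝ) (a x : Fin 2) (l : Fin 4) : ℝ :=
  (1 + strategySign 1 l * Real.cos (2 * θ)) *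
    (1 + outcomeSign a *
      (if x = 0 then strategySign 0 l * Real.sin (2 * θ) else -strategySign 1 l)) / 8

lemma boxBobZeroProb_mem_Icc (θ : ℝ) (a x : Fin 2) (l : Fin 4) :
    boxBobZeroProb θ a x l ∈ Set.Icc (0 : ℝ) (1 / 2) := by
  have key : ∀ u v : ℝ, u ∈ Set.Icc (-1 : ℝ) 1 → v ∈ Set.Icc (-1 : ℝ) 1 →
      (1 + u) * (1 + v) / 8 ∈ Set.Icc (0 : ℝ) (1 / 2) := by
    rintro u v ⟨hu, hu'⟩ ⟨hv, hv'⟩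
    constructor <;> nlinarith
  have hs1 := Real.neg_one_le_sin (2 * θ)
  have hs2 := Real.sin_le_one (2 * θ)
  have hc1 := Real.neg_one_le_cos (2 * θ)
  have hc2 := Real.cos_le_one (2 * θ)
  apply key
  · rcases strategySign_eq_or 1 l with h | h <;> rw [h] <;> constructor <;> linarith
  · rcases outcomeSign_eq_or a with h | h <;> rcases strategySign_eq_or 0 l with h' | h' <;>
      rcases strategySign_eq_or 1 l with h'' | h'' <;> rw [h, h', h''] <;>
      split_ifs <;> constructor <;> linarith

lemma memS1ABo_pTheta (θ : ℝ) : MemS1ABo (pTheta θ) := by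
  refine ⟨4, fun _ => 1 / 4,
    fun a b x l => 1 / 4 + outcomeSign b * (boxBobZeroProb θ a x l - 1 / 4),
    fun c z l => (1 + outcomeSign c * strategySign z l) / 2,
    ⟨fun _ => by norm_num, by simp⟩, ⟨?_, ?_, ?_, ?_⟩, ?_, ?_, ?_⟩
  · intro a b x l
    obtain ⟨h, h'⟩ := boxBobZeroProb_mem_Icc θ a x l
    rcases outcomeSign_eq_or b with hb | hb <;> simp only [hb] <;> linarith
  · intro x l
    simp only [Fin.sum_univ_two, outcomeSign_zero, outcomeSign_one]
    ring
  · intro a x l l'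
    simp only [Fin.sum_univ_two, outcomeSign_zero, outcomeSign_one]
    ring
  · intro b x x' l
    simp only [Fin.sum_univ_two, outcomeSign_zero, outcomeSign_one, boxBobZeroProb]
    ring
  · intro c z l
    rcases outcomeSign_eq_or c with h | h <;> rcases strategySign_eq_or z l with h' | h' <;>
      norm_num [h, h']
  · intro z l
    simp only [Fin.sum_univ_two, outcomeSign_zero, outcomeSign_one]
    ring
  · intro a b c x z
    rw [pTheta_eq]
    simp only [Fin.sum_univ_four, boxBobZeroProb, bobZeroProb]
    fin_cases x <;> fin_cases z <;> simp [strategySign] <;> ring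

lemma abs_sum_mul_le_of_weights {ι : Type*} [Fintype ι] (v f : ι → ℝ) (hv : ∀ i, 0 ≤ v i)
    (hf : ∀ i, |f i| ≤ 1) : |∑ i, v i * f i| ≤ ∑ i, v i := by
  refine (Finset.abs_sum_le_sum_abs _ _).trans (Finset.sum_le_sum fun i _ => ?_)
  rw [abs_mul, abs_of_nonneg (hv i)]
  exact mul_le_of_le_one_right (hv i) (hf i)

/-- A bound on the correlation of `f` and `g` on an event `β` in a product of two spaces of
mass `1 / 2`, when both `f` and `g` average to zero on that event. -/
lemma sum_mul_le_of_product_weights {ι κ : Type*} [Fintype ι] [Fintype κ]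
    (v f : ι → ℝ) (w g : κ → ℝ) (β : ι → κ → ℝ)
    (hv : ∀ i, 0 ≤ v i) (hw : ∀ j, 0 ≤ w j) (hv1 : ∑ i, v i = 1 / 2) (hw1 : ∑ j, w j = 1 / 2)
    (hf : ∀ i, |f i| ≤ 1) (hg : ∀ j, |g j| ≤ 1) (hβ : ∀ i j, β i j ≤ 1)
    (hβf : ∑ i, ∑ j, v i * w j * β i j * f i = 0)
    (hβg : ∑ i, ∑ j, v i * w j * β i j * g j = 0) :
    ∑ i, ∑ j, v i * w j * β i j * (f i * g j) ≤ 1 / 4 - ∑ i, ∑ j, v i * w j * β i j := by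
  have hA := abs_le.mp (abs_sum_mul_le_of_weights v f hv hf)
  have hB := abs_le.mp (abs_sum_mul_le_of_weights w g hw hg)
  rw [hv1] at hA
  rw [hw1] at hB
  have expand : ∀ ε : ℝ, |ε| = 1 →
      0 ≤ 1 / 4 - ∑ i, ∑ j, v i * w j * β i j
        + ε * (∑ i, v i * f i) / 2 + ε * (∑ j, w j * g j) / 2
        + (∑ i, v i * f i) * (∑ j, w j * g j)
        - ∑ i, ∑ j, v i * w j * β i j * (f i * g j) := by
    intro ε hε
    have hpos : 0 ≤ ∑ i, ∑ j, v i * w j * (1 - β i j) * ((1 + ε * f i) * (1 + ε * g j)) := by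
      refine Finset.sum_nonneg fun i _ => Finset.sum_nonneg fun j _ => ?_
      have h1 : |ε * f i| ≤ 1 := by rw [abs_mul, hε, one_mul]; exact hf i
      have h2 : |ε * g j| ≤ 1 := by rw [abs_mul, hε, one_mul]; exact hg j
      have h1' := (abs_le.mp h1).1
      have h2' := (abs_le.mp h2).1
      exact mul_nonneg (mul_nonneg (mul_nonneg (hv i) (hw j)) (by linarith [hβ i j]))
        (mul_nonneg (by linarith) (by linarith))
    have hε2 : ε * ε = 1 := by rw [← abs_mul_abs_self, hε, one_mul]
    have hsplit : ∀ i j, v i * w j * (1 - β i j) * ((1 + ε * f i) * (1 + ε * g j)) =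
        v i * w j + ε * (v i * f i * w j) + ε * (v i * (w j * g j)) + v i * f i * (w j * g j)
        - v i * w j * β i j - ε * (v i * w j * β i j * f i) - ε * (v i * w j * β i j * g j)
        - v i * w j * β i j * (f i * g j) := by
      intro i j
      linear_combination (v i * w j * (1 - β i j) * f i * g j) * hε2
    simp only [hsplit, Finset.sum_add_distrib, Finset.sum_sub_distrib, ← Finset.mul_sum,
      hβf, hβg] at hpos
    simp only [← Finset.sum_mul, hv1, hw1] at hpos
    linarith
  have hplus := expand 1 (by simp)
  have hminus := expand (-1) (by simp)
  generalize ∑ i, v i * f i = A at *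
  generalize ∑ j, w j * g j = B at *
  rcases le_total 0 A with ha | ha <;> rcases le_total 0 B with hb | hb <;> nlinarith

lemma abs_sub_le_one_of_add_eq_one {s t : ℝ} (hs : 0 ≤ s) (ht : 0 ≤ t) (h : s + t = 1) :
    |s - t| ≤ 1 := by
  rw [abs_le]
  constructor <;> linarith

/-- If in a classical chain `b = 0` forces opposite outcomes on the inputs `(1, 1)`, then the
correlator of the inputs `(0, 0)` on the event `b = 0` is bounded. -/
lemma MemS0.correlator_le {p : Corr} (h : MemS0 p)
    (h00 : p 0 0 0 1 1 = 0) (h11 : p 1 0 1 1 1 = 0)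
    (hmA : ∑ b : Fin 2, ∑ c : Fin 2, p 1 b c 1 1 = 1 / 2)
    (hmC : ∑ a : Fin 2, ∑ b : Fin 2, p a b 0 1 1 = 1 / 2)
    (hA0 : p 0 0 0 0 1 = p 1 0 0 0 1) (hC0 : p 1 0 0 1 0 = p 1 0 1 1 0) :
    p 0 0 0 0 0 - p 0 0 1 0 0 - p 1 0 0 0 0 + p 1 0 1 0 0 ≤
      p 0 0 1 1 1 + (1 / 4 - p 1 0 0 1 1) := by
  obtain ⟨n1, n2, q1, q2, pA, pB, pC, ⟨hq1, hq1s⟩, ⟨hq2, hq2s⟩, hA, hAs, hB, hBs, hC, hCs, hp⟩ := h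
  simp only [Fin.sum_univ_two] at hAs hBs hCs hmA hmC
  have hterm : ∀ a b c x z i j, 0 ≤ q1 i * q2 j * pA a x i * pB b i j * pC c z j :=
    fun a b c x z i j => mul_nonneg (mul_nonneg (mul_nonneg (mul_nonneg (hq1 i) (hq2 j))
      (hA _ _ _)) (hB _ _ _)) (hC _ _ _)
  have pointwise : ∀ a b c x z, p a b c x z = 0 → ∀ i j,
      q1 i * q2 j * pA a x i * pB b i j * pC c z j = 0 := by
    intro a b c x z h i j
    rw [hp, Finset.sum_eq_zero_iff_of_nonneg
      fun i _ => Finset.sum_nonneg fun j _ => hterm a b c x z i j] at h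
    exact (Finset.sum_eq_zero_iff_of_nonneg fun j _ => hterm a b c x z i j).mp
      (h i (Finset.mem_univ i)) j (Finset.mem_univ j)
  have hz0 := pointwise 0 0 0 1 1 h00
  have hz1 := pointwise 1 0 1 1 1 h11
  have hv1 : ∑ i, q1 i * pA 1 1 i = 1 / 2 := by
    rw [← hmA]
    simp only [hp, ← Finset.sum_add_distrib]
    refine Finset.sum_congr rfl fun i _ => ?_
    rw [← mul_one (q1 i * pA 1 1 i), ← hq2s, Finset.mul_sum]
    refine Finset.sum_congr rfl fun j _ => ?_
    have h1 : pB 1 i j = 1 - pB 0 i j := by linarith [hBs i j]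
    have h2 : pC 1 1 j = 1 - pC 0 1 j := by linarith [hCs 1 j]
    rw [h1, h2]; ring
  have hw1 : ∑ j, q2 j * pC 0 1 j = 1 / 2 := by
    rw [← hmC]
    simp only [hp, ← Finset.sum_add_distrib]
    rw [Finset.sum_comm]
    refine Finset.sum_congr rfl fun j _ => ?_
    rw [← mul_one (q2 j * pC 0 1 j), ← hq1s, Finset.mul_sum]
    refine Finset.sum_congr rfl fun i _ => ?_
    have h1 : pB 1 i j = 1 - pB 0 i j := by linarith [hBs i j]
    have h2 : pA 1 1 i = 1 - pA 0 1 i := by linarith [hAs 1 i]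
    rw [h1, h2]; ring
  have block := sum_mul_le_of_product_weights
    (fun i => q1 i * pA 1 1 i) (fun i => pA 0 0 i - pA 1 0 i)
    (fun j => q2 j * pC 0 1 j) (fun j => pC 0 0 j - pC 1 0 j) (pB 0)
    (fun i => mul_nonneg (hq1 i) (hA _ _ _)) (fun j => mul_nonneg (hq2 j) (hC _ _ _)) hv1 hw1
    (fun i => abs_sub_le_one_of_add_eq_one (hA _ _ _) (hA _ _ _) (hAs 0 i))
    (fun j => abs_sub_le_one_of_add_eq_one (hC _ _ _) (hC _ _ _) (hCs 0 j))
    (fun i j => by linarith [hBs i j, hB 1 i j])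
    (by
      rw [← sub_eq_zero.mpr hA0]
      simp only [hp, ← Finset.sum_sub_distrib]
      refine Finset.sum_congr rfl fun i _ => Finset.sum_congr rfl fun j _ => ?_
      have h1 : pA 1 1 i = 1 - pA 0 1 i := by linarith [hAs 1 i]
      rw [h1]
      linear_combination (-(pA 0 0 i - pA 1 0 i)) * hz0 i j)
    (by
      rw [← sub_eq_zero.mpr hC0]
      simp only [hp, ← Finset.sum_sub_distrib]
      refine Finset.sum_congr rfl fun i _ => Finset.sum_congr rfl fun j _ => ?_
      have h1 : pC 0 1 j = 1 - pC 1 1 j := by linarith [hCs 1 j]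
      rw [h1]
      linear_combination (-(pC 0 0 j - pC 1 0 j)) * hz1 i j)
  have hmass : ∑ i, ∑ j, q1 i * pA 1 1 i * (q2 j * pC 0 1 j) * pB 0 i j = p 1 0 0 1 1 := by
    rw [hp]
    exact Finset.sum_congr rfl fun i _ => Finset.sum_congr rfl fun j _ => by ring
  rw [hmass] at block
  refine le_trans ?_ (add_le_add_right block _)
  simp only [hp, ← Finset.sum_add_distrib, ← Finset.sum_sub_distrib]
  refine Finset.sum_le_sum fun i _ => Finset.sum_le_sum fun j _ => ?_
  have hfg : (pA 0 0 i - pA 1 0 i) * (pC 0 0 j - pC 1 0 j) ≤ 1 := by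
    refine (le_abs_self _).trans ?_
    rw [abs_mul]
    exact mul_le_one₀ (abs_sub_le_one_of_add_eq_one (hA _ _ _) (hA _ _ _) (hAs 0 i))
      (abs_nonneg _) (abs_sub_le_one_of_add_eq_one (hC _ _ _) (hC _ _ _) (hCs 0 j))
  have hmul := mul_le_mul_of_nonneg_left hfg (hterm 0 0 1 1 1 i j)
  have h0 := hz0 i j
  have h1 := hz1 i j
  have hA1 : pA 1 1 i = 1 - pA 0 1 i := by linarith [hAs 1 i]
  have hC1 : pC 1 1 j = 1 - pC 0 1 j := by linarith [hCs 1 j]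
  rw [hA1, hC1] at h1
  rw [hC1] at hmul
  rw [hA1, hC1]
  linear_combination hmul +
    ((pA 0 0 i - pA 1 0 i) * (pC 0 0 j - pC 1 0 j)) * (h0 + h1)

lemma MemS0.swap {p : Corr} (h : MemS0 p) : MemS0 fun a b c x z => p c b a z x := by
  obtain ⟨n1, n2, q1, q2, pA, pB, pC, hq1, hq2, hA, hAs, hB, hBs, hC, hCs, hp⟩ := h
  refine ⟨n2, n1, q2, q1, pC, fun b j i => pB b i j, pA, hq2, hq1, hC, hCs,
    fun b j i => hB b i j, fun j i => hBs i j, hA, hAs, fun a b c x z => ?_⟩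
  simp only [hp]
  rw [Finset.sum_comm]
  exact Finset.sum_congr rfl fun j _ => Finset.sum_congr rfl fun i _ => by ring

lemma sin_mul_cos_le_sin_sq_of_memS0_pTheta {θ : ℝ} (h : MemS0 (pTheta θ)) :
    Real.sin θ * Real.cos θ ≤ Real.sin θ ^ 2 := by
  have hle := h.correlator_le
    (by simp [pTheta_eq, bobZeroProb]) (by simp [pTheta_eq, bobZeroProb])
    (by simp [pTheta_eq]; ring)
    (by simp [pTheta_eq]; ring)
    (by simp [pTheta_eq, bobZeroProb]) (by simp [pTheta_eq, bobZeroProb])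
  simp [pTheta_eq, bobZeroProb, Real.sin_two_mul, Real.cos_two_mul'] at hle
  linarith [Real.sin_sq_add_cos_sq θ]

/-- for `θ ∈ (0, π/2)` with `θ ≠ π/4`, the quantum correlation
`p_θ` is minimally network nonclassical. -/
theorem pTheta_MNN (θ : ℝ) (h0 : 0 < θ) (h1 : θ < Real.pi / 2) (h2 : θ ≠ Real.pi / 4) :
    ¬ MemS0 (pTheta θ) ∧ MemS1ABo (pTheta θ) ∧ MemS1BCo (pTheta θ) := by
  refine ⟨fun h => h2 ?_, memS1ABo_pTheta θ, MemS1BCo.of_swap ?_⟩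
  · have hsin : 0 < Real.sin θ := Real.sin_pos_of_pos_of_lt_pi h0 (by linarith)
    have hcos : 0 < Real.cos θ := Real.cos_pos_of_mem_Ioo ⟨by linarith, h1⟩
    have hswap : MemS0 (pTheta (Real.pi / 2 - θ)) := by
      convert h.swap using 6 with a b c x z
      exact pTheta_swap θ _ _ _ _ _
    have hle := sin_mul_cos_le_sin_sq_of_memS0_pTheta h
    have hge := sin_mul_cos_le_sin_sq_of_memS0_pTheta hswap
    rw [Real.sin_pi_div_two_sub, Real.cos_pi_div_two_sub] at hge
    have heq : Real.sin θ = Real.sin (Real.pi / 2 - θ) := by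
      rw [Real.sin_pi_div_two_sub]
      nlinarith
    have := Real.injOn_sin ⟨by linarith, h1.le⟩ ⟨by linarith, by linarith⟩ heq
    linarith
  · convert memS1ABo_pTheta (Real.pi / 2 - θ) using 6 with a b c x z
    exact (pTheta_swap θ _ _ _ _ _).symm
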